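/- arXiv:2506.14969 — 3 statements merged into one kernel-verified Lean document; each statement's English description precedes it below -/
import Mathlib

section
/- Let R be a regular local ring of dimension n with maximal ideal m generated by a regular sequence x₁,…,xₙ, and r₁,…,rₙ positive integers. Then S = R[t₁,…,tₙ]/(t₁^{r₁}−x₁,…,tₙ^{rₙ}−xₙ) is a regular local ring of dimension n. -/
/-!
The Kummer cover `S = R[t₁, …, tₙ] / (tᵢ ^ rᵢ - xᵢ)` is integral over `R`, so every maximal ideal
of `S` lies over the maximal ideal `𝔪 = (x₁, …, xₙ)` and contains each `tᵢ`, as `tᵢ ^ rᵢ = xᵢ`.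
Modulo the `tᵢ` only the residue field `R ⧸ 𝔪` is left, so `S` is local with maximal ideal
`(t₁, …, tₙ)`. In an algebraically closed field the `xᵢ` have `rᵢ`-th roots, so every geometric
point of `Spec R` lifts to `Spec S`; by going up, `n = dim R ≤ dim S`. As the dimension of a
noetherian local ring is at most the number of generators of its maximal ideal, `dim S = n`.
-/

open MvPolynomial (X C aeval)

section IntegralExtension

variable {R S : Type*} [CommRing R] [CommRing S] [Algebra R S]

theorem ringKrullDim_le_of_hasGoingUp_of_comap_surjective [Algebra.HasGoingUp R S]
    (h : Function.Surjective (PrimeSpectrum.comap (algebraMap R S))) :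
    ringKrullDim R ≤ ringKrullDim S := by
  refine iSup_le fun l => ?_
  obtain ⟨Q, hQ⟩ := h l.head
  have : Q.asIdeal.LiesOver l.head.asIdeal := ⟨(congrArg PrimeSpectrum.asIdeal hQ).symm⟩
  obtain ⟨L, hL, -⟩ := Ideal.exists_ltSeries_of_hasGoingUp l Q.asIdeal
  exact hL ▸ Order.LTSeries.length_le_krullDim L

variable [IsLocalRing R] [Algebra.IsIntegral R S] {M N : Ideal S}

theorem radical_map_maximalIdeal_le_of_isMaximal (hN : N.IsMaximal) :
    ((IsLocalRing.maximalIdeal R).map (algebraMap R S)).radical ≤ N := by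
  rw [hN.isPrime.radical_le_iff, Ideal.map_le_iff_le_comap]
  exact (IsLocalRing.eq_maximalIdeal (hN.under R)).ge

theorem eq_of_isMaximal_of_mk_comp_algebraMap_surjective
    (hM : (IsLocalRing.maximalIdeal R).map (algebraMap R S) ≤ M)
    (hM' : M ≤ ((IsLocalRing.maximalIdeal R).map (algebraMap R S)).radical)
    (hsurj : Function.Surjective ((Ideal.Quotient.mk M).comp (algebraMap R S)))
    (hN : N.IsMaximal) : N = M := by
  have hMN : M ≤ N := hM'.trans (radical_map_maximalIdeal_le_of_isMaximal hN)
  refine le_antisymm (fun s hs => ?_) hMN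
  obtain ⟨a, ha⟩ := hsurj (Ideal.Quotient.mk M s)
  have hsa : algebraMap R S a - s ∈ M := Ideal.Quotient.eq.1 ha
  have haN : a ∈ N.under R := by simpa using N.add_mem (hMN hsa) hs
  have haM : algebraMap R S a ∈ M := by
    rw [IsLocalRing.eq_maximalIdeal (hN.under R)] at haN
    exact hM (Ideal.mem_map_of_mem _ haN)
  simpa using M.sub_mem haM hsa

theorem isLocalRing_of_mk_comp_algebraMap_surjective [Nontrivial S]
    (hM : (IsLocalRing.maximalIdeal R).map (algebraMap R S) ≤ M)
    (hM' : M ≤ ((IsLocalRing.maximalIdeal R).map (algebraMap R S)).radical)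
    (hsurj : Function.Surjective ((Ideal.Quotient.mk M).comp (algebraMap R S))) :
    IsLocalRing S := by
  obtain ⟨N, hN⟩ := Ideal.exists_maximal S
  have eq_M {N' : Ideal S} (hN' : N'.IsMaximal) : N' = M :=
    eq_of_isMaximal_of_mk_comp_algebraMap_surjective hM hM' hsurj hN'
  exact .of_unique_max_ideal ⟨M, eq_M hN ▸ hN, fun _ => eq_M⟩

end IntegralExtension

theorem spanFinrank_span_range_le_card {R M ι : Type*} [Semiring R] [AddCommMonoid M] [Module R M]
    [Fintype ι] (v : ι → M) :
    (Submodule.span R (Set.range v)).spanFinrank ≤ Fintype.card ι :=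
  (Submodule.spanFinrank_span_le_ncard_of_finite (Set.finite_range v)).trans <| by
    rw [← Set.image_univ, ← Nat.card_eq_fintype_card, ← Set.ncard_univ]
    exact Set.ncard_image_le

/-- The Kummer cover `R[tᵢ] / (tᵢ ^ rᵢ - xᵢ)` of `R`, obtained by adjoining an `rᵢ`-th root of each
`xᵢ`. It is an abbreviation so that it inherits the instances of the quotient ring. -/
abbrev KummerCover {R ι : Type*} [CommRing R] (x : ι → R) (r : ι → ℕ) : Type _ :=
  MvPolynomial ι R ⧸ Ideal.span (Set.range fun i : ι => (X i : MvPolynomial ι R) ^ r i - C (x i))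

namespace KummerCover

variable {R ι : Type*} [CommRing R] (x : ι → R) (r : ι → ℕ)

/-- The adjoined `rᵢ`-th root `tᵢ` of `xᵢ`. -/
noncomputable def root (i : ι) : KummerCover x r :=
  Ideal.Quotient.mk _ (X i)

/-- The ideal `(tᵢ)` generated by the adjoined roots. It is the maximal ideal of the cover when
`(xᵢ)` is the maximal ideal of a local ring `R`. -/
noncomputable abbrev rootIdeal : Ideal (KummerCover x r) :=
  Ideal.span (Set.range (root x r))

theorem root_mem_rootIdeal (i : ι) : root x r i ∈ rootIdeal x r :=
  Ideal.subset_span (Set.mem_range_self i)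

theorem root_pow (i : ι) : root x r i ^ r i = algebraMap R (KummerCover x r) (x i) :=
  Ideal.Quotient.eq.2 <| Ideal.subset_span ⟨i, rfl⟩

theorem aeval_root : aeval (root x r) = Ideal.Quotient.mkₐ R _ := by
  ext i
  simp [root]

theorem adjoin_range_root : Algebra.adjoin R (Set.range (root x r)) = ⊤ := by
  rw [Algebra.adjoin_range_eq_range_aeval, aeval_root, AlgHom.range_eq_top]
  exact Ideal.Quotient.mkₐ_surjective R _

variable {x r} in
/-- The universal property: `rᵢ`-th roots `yᵢ` of the `xᵢ` in an `R`-algebra `A` determine an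
`R`-algebra map sending each `tᵢ` to `yᵢ`. -/
noncomputable def lift {A : Type*} [CommRing A] [Algebra R A] (y : ι → A)
    (hy : ∀ i, y i ^ r i = algebraMap R A (x i)) : KummerCover x r →ₐ[R] A :=
  Ideal.Quotient.liftₐ _ (aeval y) <| show _ ≤ RingHom.ker (aeval y) by
    rw [Ideal.span_le]
    rintro _ ⟨i, rfl⟩
    simp [hy]

theorem rootIdeal_le_radical_map :
    rootIdeal x r ≤
      ((Ideal.span (Set.range x)).map (algebraMap R (KummerCover x r))).radical := by
  rw [Ideal.span_le]
  rintro _ ⟨i, rfl⟩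
  refine ⟨r i, ?_⟩
  rw [root_pow]
  exact Ideal.mem_map_of_mem _ (Ideal.subset_span ⟨i, rfl⟩)

theorem mk_rootIdeal_comp_algebraMap_surjective :
    Function.Surjective
      ((Ideal.Quotient.mk (rootIdeal x r)).comp (algebraMap R (KummerCover x r))) := by
  have h_eval : (Ideal.Quotient.mk (rootIdeal x r)).comp (Ideal.Quotient.mk _) =
      ((Ideal.Quotient.mk (rootIdeal x r)).comp (algebraMap R (KummerCover x r))).comp
        MvPolynomial.constantCoeff := by
    refine MvPolynomial.ringHom_ext (fun a => ?_) fun i => ?_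
    · rw [RingHom.comp_apply _ MvPolynomial.constantCoeff, MvPolynomial.constantCoeff_C]
      rfl
    · rw [RingHom.comp_apply _ MvPolynomial.constantCoeff, MvPolynomial.constantCoeff_X, map_zero]
      exact Ideal.Quotient.eq_zero_iff_mem.2 (root_mem_rootIdeal x r i)
  intro z
  obtain ⟨s, rfl⟩ := Ideal.Quotient.mk_surjective z
  obtain ⟨p, rfl⟩ := Ideal.Quotient.mk_surjective s
  exact ⟨MvPolynomial.constantCoeff p, (RingHom.congr_fun h_eval p).symm⟩

variable {r} (hr : ∀ i, 0 < r i)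
include hr

theorem isIntegral : Algebra.IsIntegral R (KummerCover x r) := by
  have h_root : ∀ t ∈ Set.range (root x r), IsIntegral R t := by
    rintro _ ⟨i, rfl⟩
    exact .of_pow (hr i) (root_pow x r i ▸ isIntegral_algebraMap)
  have h_top : ⊤ ≤ integralClosure R (KummerCover x r) :=
    adjoin_range_root x r ▸ Algebra.adjoin_le h_root
  exact ⟨fun _ => h_top Algebra.mem_top⟩

theorem map_span_le_rootIdeal :
    (Ideal.span (Set.range x)).map (algebraMap R (KummerCover x r)) ≤ rootIdeal x r := by
  rw [Ideal.map_le_iff_le_comap, Ideal.span_le]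
  rintro _ ⟨i, rfl⟩
  rw [SetLike.mem_coe, Ideal.mem_comap, ← root_pow]
  exact Ideal.pow_mem_of_mem _ (root_mem_rootIdeal x r i) _ (hr i)

theorem comap_algebraMap_surjective :
    Function.Surjective (PrimeSpectrum.comap (algebraMap R (KummerCover x r))) := by
  intro P
  let K := AlgebraicClosure P.asIdeal.ResidueField
  choose y hy using fun i => IsAlgClosed.exists_pow_nat_eq (algebraMap R K (x i)) (hr i)
  have hker : RingHom.ker (algebraMap R K) = P.asIdeal := by
    rw [IsScalarTower.algebraMap_eq R P.asIdeal.ResidueField K,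
      RingHom.ker_comp_of_injective _ (algebraMap P.asIdeal.ResidueField K).injective,
      Ideal.ker_algebraMap_residueField]
  refine ⟨⟨RingHom.ker (lift y hy), RingHom.ker_isPrime _⟩, PrimeSpectrum.ext ?_⟩
  calc (RingHom.ker (lift y hy)).comap (algebraMap R (KummerCover x r))
    _ = RingHom.ker ((lift y hy : KummerCover x r →+* K).comp (algebraMap R _)) :=
      RingHom.comap_ker _ _
    _ = RingHom.ker (algebraMap R K) := by rw [(lift y hy).comp_algebraMap]
    _ = P.asIdeal := hker

theorem ringKrullDim_le : ringKrullDim R ≤ ringKrullDim (KummerCover x r) :=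
  have := isIntegral x hr
  ringKrullDim_le_of_hasGoingUp_of_comap_surjective (comap_algebraMap_surjective x hr)

theorem nontrivial [Nontrivial R] : Nontrivial (KummerCover x r) :=
  PrimeSpectrum.nonempty_iff_nontrivial.1 (comap_algebraMap_surjective x hr).nonempty

variable {x} [IsLocalRing R] (hx : Ideal.span (Set.range x) = IsLocalRing.maximalIdeal R)
include hx

theorem isLocalRing : IsLocalRing (KummerCover x r) :=
  have := isIntegral x hr
  have := nontrivial x hr
  isLocalRing_of_mk_comp_algebraMap_surjective (hx ▸ map_span_le_rootIdeal x hr)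
    (hx ▸ rootIdeal_le_radical_map x r) (mk_rootIdeal_comp_algebraMap_surjective x r)

theorem maximalIdeal_eq_rootIdeal [IsLocalRing (KummerCover x r)] :
    IsLocalRing.maximalIdeal (KummerCover x r) = rootIdeal x r :=
  have := isIntegral x hr
  eq_of_isMaximal_of_mk_comp_algebraMap_surjective (hx ▸ map_span_le_rootIdeal x hr)
    (hx ▸ rootIdeal_le_radical_map x r) (mk_rootIdeal_comp_algebraMap_surjective x r)
    (IsLocalRing.maximalIdeal.isMaximal _)

theorem spanFinrank_maximalIdeal_le_card [Fintype ι] [IsLocalRing (KummerCover x r)] :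
    (IsLocalRing.maximalIdeal (KummerCover x r)).spanFinrank ≤ Fintype.card ι :=
  maximalIdeal_eq_rootIdeal hr hx ▸ spanFinrank_span_range_le_card (root x r)

theorem isRegularLocalRing [Fintype ι] [IsNoetherianRing R]
    (hdim : Fintype.card ι ≤ ringKrullDim R) : IsRegularLocalRing (KummerCover x r) :=
  have := isLocalRing hr hx
  .of_spanFinrank_maximalIdeal_le _ <|
    calc ((IsLocalRing.maximalIdeal (KummerCover x r)).spanFinrank : WithBot ℕ∞)
      _ ≤ Fintype.card ι := mod_cast spanFinrank_maximalIdeal_le_card hr hx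
      _ ≤ ringKrullDim R := hdim
      _ ≤ ringKrullDim (KummerCover x r) := ringKrullDim_le x hr

theorem ringKrullDim_eq_card [Fintype ι] [IsNoetherianRing R]
    (hdim : Fintype.card ι ≤ ringKrullDim R) :
    ringKrullDim (KummerCover x r) = Fintype.card ι := by
  have := isLocalRing hr hx
  refine le_antisymm ?_ (hdim.trans (ringKrullDim_le x hr))
  exact (ringKrullDim_le_spanFinrank_maximalIdeal _).trans
    (mod_cast spanFinrank_maximalIdeal_le_card hr hx)

end KummerCover

open MvPolynomial in
/-- Let `R` be a regular local ring of dimension `n` with maximal ideal generated by a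
regular sequence `x₁, …, xₙ`, and `r₁, …, rₙ` positive integers.  Then
`S = R[t₁,…,tₙ]/(t₁^{r₁} − x₁, …, tₙ^{rₙ} − xₙ)` is a regular local ring of dimension `n`
(i.e. a noetherian local ring of Krull dimension `n` whose maximal ideal is generated by
`n` elements). -/
theorem kummer_cover_of_regular_local_is_regular_local {R : Type*} [CommRing R]
    [IsNoetherianRing R] [IsLocalRing R] (n : ℕ) (hdim : ringKrullDim R = n)
    (x : Fin n → R) (hreg : RingTheory.Sequence.IsRegular R (List.ofFn x))
    (hx : Ideal.span (Set.range x) = IsLocalRing.maximalIdeal R)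
    (r : Fin n → ℕ) (hr : ∀ i, 0 < r i) :
    IsNoetherianRing (MvPolynomial (Fin n) R ⧸
        Ideal.span (Set.range fun i : Fin n => (X i) ^ r i - C (x i))) ∧
    ∃ _ : IsLocalRing (MvPolynomial (Fin n) R ⧸
        Ideal.span (Set.range fun i : Fin n => (X i) ^ r i - C (x i))),
      ringKrullDim (MvPolynomial (Fin n) R ⧸
          Ideal.span (Set.range fun i : Fin n => (X i) ^ r i - C (x i))) = n ∧
      ∃ s : Finset (MvPolynomial (Fin n) R ⧸
          Ideal.span (Set.range fun i : Fin n => (X i) ^ r i - C (x i))),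
        s.card = n ∧ Ideal.span (s : Set _) = IsLocalRing.maximalIdeal (MvPolynomial (Fin n) R ⧸
          Ideal.span (Set.range fun i : Fin n => (X i) ^ r i - C (x i))) := by
  have h_card : Fintype.card (Fin n) ≤ ringKrullDim R := by rw [Fintype.card_fin, hdim]
  have h_reg : IsRegularLocalRing (KummerCover x r) := KummerCover.isRegularLocalRing hr hx h_card
  have h_dim : ringKrullDim (KummerCover x r) = n := by
    rw [KummerCover.ringKrullDim_eq_card hr hx h_card, Fintype.card_fin]
  obtain ⟨s, hs_card, hs_span⟩ :=
    Submodule.FG.exists_span_finset_card_eq_spanFinrank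
      (IsLocalRing.maximalIdeal (KummerCover x r)).fg_of_isNoetherianRing
  have hs : s.card = n := by
    have h := h_reg.spanFinrank_maximalIdeal
    rw [← hs_card, h_dim] at h
    exact_mod_cast h
  exact ⟨inferInstance, inferInstance, h_dim, s, hs, hs_span⟩
end

section
/- Let R be a regular local ring. Then R is a unique factorization domain. -/
/-!
Every finite module over a regular local ring `R` has finite projective dimension, and conversely
(Serre) finite projective dimension of the residue field makes a noetherian local ring regular;
hence localizations of `R` at primes are regular again. Pick `x ∈ m \ m²`. Then `R ⧸ (x)` is
regular, so `x` is prime, and by Nagata it is enough that height-one primes `P` of `R[1/x]` are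
principal. The local rings of `R[1/x]` have smaller dimension, so by induction `P` is locally
principal, that is, invertible. Localizing a finite free resolution of `P ∩ R` shows that `P` is
stably free, and a stably free invertible module is free.
-/

open IsLocalRing CategoryTheory TensorProduct
open scoped Pointwise

universe u

namespace AuslanderBuchsbaum

section EmbeddingDimension

variable {R : Type u} [CommRing R] [IsLocalRing R]

theorem isLocalRing_quotient_span_singleton {x : R} (hx : x ∈ maximalIdeal R) :
    IsLocalRing (R ⧸ Ideal.span {x}) :=
  have : Nontrivial (R ⧸ Ideal.span {x}) :=
    Ideal.Quotient.nontrivial_iff.mpr (Ideal.span_singleton_ne_top hx)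
  .of_surjective' _ Ideal.Quotient.mk_surjective

theorem map_mk_maximalIdeal (I : Ideal R) [IsLocalRing (R ⧸ I)] :
    (maximalIdeal R).map (Ideal.Quotient.mk I) = maximalIdeal (R ⧸ I) :=
  map_maximalIdeal_of_surjective _ Ideal.Quotient.mk_surjective

theorem exists_span_insert_sdiff_singleton_eq_maximalIdeal {x : R} (hx : x ∈ maximalIdeal R)
    (hx2 : x ∉ maximalIdeal R ^ 2) {G : Set R} (hG : Ideal.span G = maximalIdeal R) :
    ∃ g ∈ G, Ideal.span (insert x (G \ {g})) = maximalIdeal R := by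
  classical
  obtain ⟨c, hcG, hcx⟩ := (Submodule.mem_span_set (R := R) (M := R)).mp (hG ▸ hx)
  obtain ⟨g, hg, hunit⟩ : ∃ g ∈ c.support, IsUnit (c g) := by
    by_contra! hnonunit
    refine hx2 (hcx ▸ pow_two (maximalIdeal R) ▸ Ideal.sum_mem _ fun g hg => ?_)
    exact Ideal.mul_mem_mul (hnonunit g hg) (hG ▸ Ideal.subset_span (hcG hg))
  refine ⟨g, hcG hg, le_antisymm (Ideal.span_le.mpr ?_) ?_⟩
  · exact Set.insert_subset hx (Set.sdiff_subset.trans (hG ▸ Ideal.subset_span))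
  rw [← hG, Ideal.span_le]
  intro y hy
  obtain rfl | hyg := eq_or_ne y g
  · refine (Ideal.unit_mul_mem_iff_mem _ hunit).mp ?_
    have hcy : c y * y = x - ∑ z ∈ c.support.erase y, c z * z :=
      eq_sub_of_add_eq ((Finset.add_sum_erase _ (fun z => c z * z) hg).trans hcx)
    rw [hcy]
    refine sub_mem (Ideal.subset_span (Set.mem_insert _ _)) (Ideal.sum_mem _ fun z hz => ?_)
    exact Ideal.mul_mem_left _ _ (Ideal.subset_span (.inr
      ⟨hcG (Finset.mem_of_mem_erase hz), Finset.ne_of_mem_erase hz⟩))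
  · exact Ideal.subset_span (.inr ⟨hy, hyg⟩)

theorem spanFinrank_maximalIdeal_quotient_add_one_le [IsNoetherianRing R] {x : R}
    (hx : x ∈ maximalIdeal R) (hx2 : x ∉ maximalIdeal R ^ 2) [IsLocalRing (R ⧸ Ideal.span {x})] :
    (maximalIdeal (R ⧸ Ideal.span {x})).spanFinrank + 1 ≤ (maximalIdeal R).spanFinrank := by
  have hfg := (maximalIdeal R).fg_of_isNoetherianRing
  have hfin := Submodule.FG.finite_generators hfg
  obtain ⟨g, hg, hspan⟩ := exists_span_insert_sdiff_singleton_eq_maximalIdeal hx hx2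
    (maximalIdeal R).span_generators
  set G := (maximalIdeal R).generators
  let π := Ideal.Quotient.mk (Ideal.span {x})
  have hπx : π x = 0 := Ideal.Quotient.mk_singleton_self x
  have hquot : Ideal.span (π '' (G \ {g})) = maximalIdeal (R ⧸ Ideal.span {x}) := by
    rw [← map_mk_maximalIdeal, ← hspan, Ideal.map_span, Set.image_insert_eq, hπx]
    exact Submodule.span_insert_zero.symm
  calc (maximalIdeal (R ⧸ Ideal.span {x})).spanFinrank + 1
      ≤ (π '' (G \ {g})).ncard + 1 := by
        rw [← hquot]
        gcongr
        exact Submodule.spanFinrank_span_le_ncard_of_finite (hfin.sdiff.image π)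
    _ ≤ (G \ {g}).ncard + 1 := by gcongr; exact Set.ncard_image_le hfin.sdiff
    _ = (maximalIdeal R).spanFinrank := by
        rw [Set.ncard_sdiff_singleton_add_one hg hfin, Submodule.FG.generators_ncard hfg]

theorem spanFinrank_maximalIdeal_le_quotient_add_one [IsNoetherianRing R] {x : R}
    (hx : x ∈ maximalIdeal R) [IsLocalRing (R ⧸ Ideal.span {x})] :
    (maximalIdeal R).spanFinrank ≤ (maximalIdeal (R ⧸ Ideal.span {x})).spanFinrank + 1 := by
  have hfg := (maximalIdeal (R ⧸ Ideal.span {x})).fg_of_isNoetherianRing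
  have hfin := Submodule.FG.finite_generators hfg
  have hspan := (maximalIdeal (R ⧸ Ideal.span {x})).span_generators
  set G := (maximalIdeal (R ⧸ Ideal.span {x})).generators
  let π := Ideal.Quotient.mk (Ideal.span {x})
  have hlift : Ideal.span (insert x (Quotient.out '' G)) = maximalIdeal R := by
    have hmap : (Ideal.span (Quotient.out '' G)).map π = (maximalIdeal R).map π := by
      rw [map_mk_maximalIdeal, ← hspan, Ideal.map_span, Set.image_image]
      simp only [π, Ideal.Quotient.mk_out, Set.image_id']
    have hle : Ideal.span {x} ≤ maximalIdeal R := (Ideal.span_singleton_le_iff_mem _).mpr hx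
    have := congrArg (Ideal.comap π) hmap
    rwa [Ideal.comap_map_of_surjective' π Ideal.Quotient.mk_surjective,
      Ideal.comap_map_of_surjective' π Ideal.Quotient.mk_surjective, Ideal.mk_ker,
      sup_eq_left.mpr hle, sup_comm, ← Ideal.span_insert] at this
  calc (maximalIdeal R).spanFinrank
      ≤ (insert x (Quotient.out '' G)).ncard := by
        rw [← hlift]
        exact Submodule.spanFinrank_span_le_ncard_of_finite ((hfin.image _).insert _)
    _ ≤ (Quotient.out '' G).ncard + 1 := Set.ncard_insert_le _ _
    _ ≤ G.ncard + 1 := by gcongr; exact Set.ncard_image_le hfin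
    _ = _ := by rw [Submodule.FG.generators_ncard hfg]

theorem spanFinrank_maximalIdeal_quotient_add_one [IsNoetherianRing R] {x : R}
    (hx : x ∈ maximalIdeal R) (hx2 : x ∉ maximalIdeal R ^ 2) [IsLocalRing (R ⧸ Ideal.span {x})] :
    (maximalIdeal (R ⧸ Ideal.span {x})).spanFinrank + 1 = (maximalIdeal R).spanFinrank :=
  (spanFinrank_maximalIdeal_quotient_add_one_le hx hx2).antisymm
    (spanFinrank_maximalIdeal_le_quotient_add_one hx)

theorem maximalIdeal_not_le_sq [IsNoetherianRing R] (h : maximalIdeal R ≠ ⊥) :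
    ¬ maximalIdeal R ≤ maximalIdeal R ^ 2 := fun hle =>
  h <| Submodule.eq_bot_of_le_smul_of_le_jacobson_bot (maximalIdeal R) _
    (maximalIdeal R).fg_of_isNoetherianRing (by rwa [smul_eq_mul, ← pow_two])
    (maximalIdeal_le_jacobson _)

theorem exists_mem_maximalIdeal_notMem_sq_and_forall_notMem [IsNoetherianRing R]
    (h : maximalIdeal R ≠ ⊥) {s : Set (Ideal R)} (hs : s.Finite) (hprime : ∀ p ∈ s, p.IsPrime)
    (hmax : maximalIdeal R ∉ s) :
    ∃ x ∈ maximalIdeal R, x ∉ maximalIdeal R ^ 2 ∧ ∀ p ∈ s, x ∉ p := by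
  by_contra! hcon
  have hcover : (maximalIdeal R : Set R) ⊆ ⋃ I ∈ insert (maximalIdeal R ^ 2) s, (I : Set R) := by
    intro x hx
    by_cases hx2 : x ∈ maximalIdeal R ^ 2
    · exact Set.mem_biUnion (Set.mem_insert _ _) hx2
    · obtain ⟨p, hp, hxp⟩ := hcon x hx hx2
      exact Set.mem_biUnion (Set.mem_insert_of_mem _ hp) hxp
  obtain ⟨I, rfl | hI, hle⟩ := (Ideal.subset_union_prime_finite (f := id) (hs.insert _)
    (maximalIdeal R ^ 2) (maximalIdeal R ^ 2)
    fun I hI hne _ => hprime I (hI.resolve_left hne)).mp hcover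
  · exact maximalIdeal_not_le_sq h hle
  · exact hmax ((maximalIdeal.isMaximal R).eq_of_le (hprime I hI).ne_top hle ▸ hI)

end EmbeddingDimension

theorem noetherianLocalRing_induction
    {motive : ∀ (R : Type u) [CommRing R] [IsLocalRing R] [IsNoetherianRing R], Prop}
    (step : ∀ (R : Type u) [CommRing R] [IsLocalRing R] [IsNoetherianRing R],
      (∀ x ∈ maximalIdeal R, x ∉ maximalIdeal R ^ 2 → ∀ [IsLocalRing (R ⧸ Ideal.span {x})],
        motive (R ⧸ Ideal.span {x})) → motive R)
    (R : Type u) [CommRing R] [IsLocalRing R] [IsNoetherianRing R] : motive R := by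
  induction h : (maximalIdeal R).spanFinrank using Nat.strong_induction_on generalizing R with
  | _ n ih =>
    refine step R fun x hx hx2 _ => ih _ ?_ _ rfl
    have := spanFinrank_maximalIdeal_quotient_add_one hx hx2
    omega

section Regular

variable {R : Type u} [CommRing R] [IsRegularLocalRing R]

theorem isRegularLocalRing_quotient_span_singleton {x : R} (hx : x ∈ maximalIdeal R)
    (hx2 : x ∉ maximalIdeal R ^ 2) : IsRegularLocalRing (R ⧸ Ideal.span {x}) := by
  have := isLocalRing_quotient_span_singleton hx
  refine IsRegularLocalRing.of_spanFinrank_maximalIdeal_le _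
    (ENat.WithBot.add_le_add_one_right_iff.mp ?_)
  calc ((maximalIdeal (R ⧸ Ideal.span {x})).spanFinrank : WithBot ℕ∞) + 1
      = (maximalIdeal R).spanFinrank := by
        exact_mod_cast spanFinrank_maximalIdeal_quotient_add_one hx hx2
    _ = ringKrullDim R := IsRegularLocalRing.spanFinrank_maximalIdeal
    _ ≤ ringKrullDim (R ⧸ Ideal.span {x}) + 1 := by
        rw [← maximalIdeal_height_eq_ringKrullDim]
        exact Ideal.height_le_ringKrullDim_quotient_add_one hx

theorem maximalIdeal_notMem_minimalPrimes (h : maximalIdeal R ≠ ⊥) :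
    maximalIdeal R ∉ minimalPrimes R := fun hmem => h <| by
  rw [← Submodule.spanFinrank_eq_zero_iff_eq_bot (maximalIdeal R).fg_of_isNoetherianRing]
  have hdim := IsRegularLocalRing.spanFinrank_maximalIdeal (R := R)
  rw [← maximalIdeal_height_eq_ringKrullDim, Ideal.height_eq_zero_iff.mpr hmem] at hdim
  exact_mod_cast hdim

end Regular

theorem isDomain_of_isPrime_span_singleton {R : Type u} [CommRing R] [IsLocalRing R]
    [IsNoetherianRing R] {x : R} (hx : x ∈ maximalIdeal R) (hprime : (Ideal.span {x}).IsPrime)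
    (hmin : ∀ p ∈ minimalPrimes R, x ∉ p) : IsDomain R := by
  obtain ⟨p, hp, hple⟩ := Ideal.exists_minimalPrimes_le (bot_le (a := Ideal.span {x}))
  have hpprime : p.IsPrime := hp.1.1
  suffices hbot : p = ⊥ by
    rw [hbot] at hpprime
    exact .of_bot_isPrime R
  -- `p ⊆ (x)` and `x ∉ p` give `p = x p`.
  refine Submodule.eq_bot_of_le_smul_of_le_jacobson_bot (maximalIdeal R) _
    p.fg_of_isNoetherianRing (fun y hy => ?_) (maximalIdeal_le_jacobson _)
  obtain ⟨z, rfl⟩ := Ideal.mem_span_singleton.mp (hple hy)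
  exact Ideal.mul_mem_mul hx ((hpprime.mem_or_mem hy).resolve_left (hmin p hp))

theorem isDomain_of_isRegularLocalRing (R : Type u) [CommRing R] [IsRegularLocalRing R] :
    IsDomain R := by
  refine noetherianLocalRing_induction (motive := fun R => IsRegularLocalRing R → IsDomain R)
    (fun R _ _ _ ih _ => ?_) R inferInstance
  by_cases hbot : maximalIdeal R = ⊥
  · exact (isField_iff_maximalIdeal_eq.mpr hbot).isDomain
  obtain ⟨x, hx, hx2, hxp⟩ := exists_mem_maximalIdeal_notMem_sq_and_forall_notMem hbot
    (minimalPrimes.finite_of_isNoetherianRing R) (fun p hp => hp.1.1)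
    (maximalIdeal_notMem_minimalPrimes hbot)
  have hreg := isRegularLocalRing_quotient_span_singleton hx hx2
  exact isDomain_of_isPrime_span_singleton hx
    ((Ideal.Quotient.isDomain_iff_prime _).mp (ih x hx hx2 hreg)) hxp

section ProjectiveDimension

variable {R : Type u} [CommRing R] {M N : Type u} [AddCommGroup M] [Module R M] [AddCommGroup N]
  [Module R N]

theorem hasProjectiveDimensionLE_zero_iff :
    HasProjectiveDimensionLE (ModuleCat.of R M) 0 ↔ Module.Projective R M := by
  rw [← projective_iff_hasProjectiveDimensionLE_zero, ← IsProjective.iff_projective]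

theorem hasProjectiveDimensionLE_succ_iff_of_exact {F K : Type u} [AddCommGroup F] [Module R F]
    [AddCommGroup K] [Module R K] [Module.Projective R F] {g : K →ₗ[R] F} {f : F →ₗ[R] M}
    (hg : Function.Injective g) (hf : Function.Surjective f) (hgf : Function.Exact g f) (n : ℕ) :
    HasProjectiveDimensionLE (ModuleCat.of R M) (n + 1) ↔
      HasProjectiveDimensionLE (ModuleCat.of R K) n := by
  let S : ShortComplex (ModuleCat.{u} R) :=
    .mk (ModuleCat.ofHom g) (ModuleCat.ofHom f) (ModuleCat.hom_ext hgf.linearMap_comp_eq_zero)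
  have hS : S.ShortExact :=
    { exact := ModuleCat.shortComplex_exact _ hgf
      mono_f := (ModuleCat.mono_iff_injective _).mpr hg
      epi_g := (ModuleCat.epi_iff_surjective _).mpr hf }
  exact hS.hasProjectiveDimensionLT_X₃_iff n ((IsProjective.iff_projective F).mp inferInstance)

theorem hasProjectiveDimensionLE_succ_iff_ker {F : Type u} [AddCommGroup F] [Module R F]
    [Module.Projective R F] {f : F →ₗ[R] M} (hf : Function.Surjective f) (n : ℕ) :
    HasProjectiveDimensionLE (ModuleCat.of R M) (n + 1) ↔
      HasProjectiveDimensionLE (ModuleCat.of R (LinearMap.ker f)) n :=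
  hasProjectiveDimensionLE_succ_iff_of_exact (Submodule.subtype_injective _) hf
    (LinearMap.exact_subtype_ker_map f) n

theorem hasProjectiveDimensionLE_of_leftInverse {i : M →ₗ[R] N} {r : N →ₗ[R] M}
    (hri : r ∘ₗ i = LinearMap.id) {n : ℕ} [HasProjectiveDimensionLE (ModuleCat.of R N) n] :
    HasProjectiveDimensionLE (ModuleCat.of R M) n :=
  Retract.hasProjectiveDimensionLT (X := ModuleCat.of R M) (Y := ModuleCat.of R N)
    ⟨ModuleCat.ofHom i, ModuleCat.ofHom r, ModuleCat.hom_ext hri⟩ (n + 1)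

theorem hasProjectiveDimensionLE_induction [IsNoetherianRing R]
    {motive : ∀ (M : Type u) [AddCommGroup M] [Module R M] [Module.Finite R M], Prop}
    (projective : ∀ (M : Type u) [AddCommGroup M] [Module R M] [Module.Finite R M]
      [Module.Projective R M], motive M)
    (ker : ∀ (F M : Type u) [AddCommGroup F] [Module R F] [Module.Finite R F] [Module.Free R F]
      [AddCommGroup M] [Module R M] [Module.Finite R M] (f : F →ₗ[R] M),
      Function.Surjective f → motive (LinearMap.ker f) → motive M)
    (n : ℕ) (M : Type u) [AddCommGroup M] [Module R M] [Module.Finite R M]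
    [hM : HasProjectiveDimensionLE (ModuleCat.of R M) n] : motive M := by
  induction n generalizing M with
  | zero =>
    have := hasProjectiveDimensionLE_zero_iff.mp hM
    exact projective M
  | succ n ih =>
    obtain ⟨F, _, _, _, _, f, hf⟩ := Module.exists_finite_presentation R M
    have := (hasProjectiveDimensionLE_succ_iff_ker hf n).mp hM
    exact ker F M f hf (ih (LinearMap.ker f))

end ProjectiveDimension

section ChangeOfRings

variable {R : Type u} [CommRing R] {x : R}

theorem isSMulRegular_of_flat {M : Type*} [AddCommGroup M] [Module R M] [Module.Flat R M]
    (hx : IsSMulRegular R x) : IsSMulRegular M x :=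
  (TensorProduct.rid R M).isSMulRegular_congr x |>.mp (hx.lTensor M)

theorem quotSMulTop_map_subtype_ker_injective {F M : Type*} [AddCommGroup F] [Module R F]
    [AddCommGroup M] [Module R M] (f : F →ₗ[R] M) (hM : IsSMulRegular M x) :
    Function.Injective (QuotSMulTop.map x (LinearMap.ker f).subtype) := by
  rw [injective_iff_map_eq_zero]
  intro a ha
  obtain ⟨k, rfl⟩ := Submodule.mkQ_surjective _ a
  obtain ⟨y, -, hy⟩ : (k : F) ∈ x • (⊤ : Submodule R F) :=
    (Submodule.Quotient.mk_eq_zero _).mp ha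
  have hxy : x • y = k := hy
  have hfy : x • f y = x • 0 := by rw [smul_zero, ← map_smul, hxy, k.2]
  exact (Submodule.Quotient.mk_eq_zero _).mpr ⟨⟨y, hM hfy⟩, trivial, Subtype.ext hy⟩

variable [IsLocalRing R] [IsNoetherianRing R]

theorem projective_quotSMulTop_iff_projective (hx : x ∈ maximalIdeal R) {M : Type u}
    [AddCommGroup M] [Module R M] [Module.Finite R M] (hM : IsSMulRegular M x) :
    Module.Projective (R ⧸ Ideal.span {x}) (QuotSMulTop x M) ↔ Module.Projective R M := by
  have := isLocalRing_quotient_span_singleton hx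
  have := Module.finitePresentation_of_finite R M
  have : Module.Finite (R ⧸ Ideal.span {x}) (QuotSMulTop x M) := .of_restrictScalars_finite R _ _
  have hfree := Module.free_quotSMulTop_iff_free R M (maximalIdeal_le_jacobson _ hx) hM
  constructor <;> intro h
  · have := hfree.mp Module.free_of_flat_of_isLocalRing
    infer_instance
  · have := hfree.mpr Module.free_of_flat_of_isLocalRing
    infer_instance

theorem hasProjectiveDimensionLE_quotSMulTop_iff (hx : x ∈ maximalIdeal R)
    (hreg : IsSMulRegular R x) (n : ℕ) (M : Type u) [AddCommGroup M] [Module R M]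
    [Module.Finite R M] (hM : IsSMulRegular M x) :
    HasProjectiveDimensionLE (ModuleCat.of (R ⧸ Ideal.span {x}) (QuotSMulTop x M)) n ↔
      HasProjectiveDimensionLE (ModuleCat.of R M) n := by
  induction n generalizing M with
  | zero =>
    rw [hasProjectiveDimensionLE_zero_iff, hasProjectiveDimensionLE_zero_iff,
      projective_quotSMulTop_iff_projective hx hM]
  | succ n ih =>
    obtain ⟨F, _, _, _, _, f, hf⟩ := Module.exists_finite_presentation R M
    have hK : IsSMulRegular (LinearMap.ker f) x := (isSMulRegular_of_flat hreg).submodule _ _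
    have hsurj := Ideal.Quotient.mk_surjective (I := Ideal.span {x})
    let g' := (QuotSMulTop.map x (LinearMap.ker f).subtype).extendScalarsOfSurjective hsurj
    let f' := (QuotSMulTop.map x f).extendScalarsOfSurjective hsurj
    have hg' : Function.Injective g' := quotSMulTop_map_subtype_ker_injective f hM
    have hf' : Function.Surjective f' := QuotSMulTop.map_surjective x hf
    have hexact : Function.Exact g' f' :=
      QuotSMulTop.map_exact x (LinearMap.exact_subtype_ker_map f) hf
    rw [hasProjectiveDimensionLE_succ_iff_ker hf,
      hasProjectiveDimensionLE_succ_iff_of_exact hg' hf' hexact, ih _ hK]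

end ChangeOfRings

theorem exists_hasProjectiveDimensionLE_of_isRegularLocalRing (R : Type u) [CommRing R]
    [IsRegularLocalRing R] (M : Type u) [AddCommGroup M] [Module R M] [Module.Finite R M] :
    ∃ n, HasProjectiveDimensionLE (ModuleCat.of R M) n := by
  refine noetherianLocalRing_induction (motive := fun R => IsRegularLocalRing R →
    ∀ (M : Type u) [AddCommGroup M] [Module R M] [Module.Finite R M],
      ∃ n, HasProjectiveDimensionLE (ModuleCat.of R M) n)
    (fun R _ _ _ ih _ M _ _ _ => ?_) R inferInstance M
  by_cases hbot : maximalIdeal R = ⊥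
  · let := (isField_iff_maximalIdeal_eq.mpr hbot).toField
    exact ⟨0, hasProjectiveDimensionLE_zero_iff.mpr inferInstance⟩
  have := isDomain_of_isRegularLocalRing R
  obtain ⟨x, hx, hx2⟩ := SetLike.not_le_iff_exists.mp (maximalIdeal_not_le_sq hbot)
  have hreg : IsSMulRegular R x :=
    IsSMulRegular.of_ne_zero fun hx0 => hx2 (hx0 ▸ zero_mem _)
  have hquot := isRegularLocalRing_quotient_span_singleton hx hx2
  obtain ⟨F, _, _, _, _, f, hf⟩ := Module.exists_finite_presentation R M
  have : Module.Finite (R ⧸ Ideal.span {x}) (QuotSMulTop x (LinearMap.ker f)) :=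
    .of_restrictScalars_finite R _ _
  obtain ⟨n, hn⟩ := ih x hx hx2 hquot (QuotSMulTop x (LinearMap.ker f))
  have hK : IsSMulRegular (LinearMap.ker f) x := (isSMulRegular_of_flat hreg).submodule _ _
  exact ⟨n + 1, (hasProjectiveDimensionLE_succ_iff_ker hf n).mpr
    ((hasProjectiveDimensionLE_quotSMulTop_iff hx hreg n _ hK).mp hn)⟩

section DepthZero

variable {R : Type u} [CommRing R] [IsLocalRing R] [IsNoetherianRing R]

theorem lTensor_residueField_injective_of_mem_associatedPrimes
    (hR : maximalIdeal R ∈ associatedPrimes R R) {K F : Type*} [AddCommGroup K] [Module R K]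
    [Module.Flat R K] [AddCommGroup F] [Module R F] {g : K →ₗ[R] F} (hg : Function.Injective g) :
    Function.Injective (g.lTensor (ResidueField R)) := by
  obtain ⟨-, (j : ResidueField R →ₗ[R] R), hj⟩ :=
    (isAssociatedPrime_iff_exists_injective_linearMap (maximalIdeal R) R).mp hR
  have hRg : Function.Injective (g.lTensor R) :=
    Module.Flat.lTensor_preserves_injective_linearMap g hg
  have hjK : Function.Injective (j.rTensor K) :=
    Module.Flat.rTensor_preserves_injective_linearMap j hj
  have hcomm : j.rTensor F ∘ₗ g.lTensor (ResidueField R) = g.lTensor R ∘ₗ j.rTensor K := by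
    rw [LinearMap.rTensor_comp_lTensor, LinearMap.lTensor_comp_rTensor]
  refine Function.Injective.of_comp (f := j.rTensor F) ?_
  rw [← LinearMap.coe_comp, hcomm]
  exact hRg.comp hjK

theorem projective_of_mem_associatedPrimes (hR : maximalIdeal R ∈ associatedPrimes R R) (n : ℕ)
    (M : Type u) [AddCommGroup M] [Module R M] [Module.Finite R M]
    [HasProjectiveDimensionLE (ModuleCat.of R M) n] : Module.Projective R M := by
  refine hasProjectiveDimensionLE_induction (motive := fun M [AddCommGroup M] [Module R M] _ =>
    Module.Projective R M) (fun M _ _ _ _ => inferInstance)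
    (fun F M _ _ _ _ _ _ _ f hf _ => ?_) n M
  have hsplit := (split_injective_iff_lTensor_residueField_injective _).mpr
    (lTensor_residueField_injective_of_mem_associatedPrimes hR
      (Submodule.subtype_injective (LinearMap.ker f)))
  obtain ⟨s, hs⟩ := ((LinearMap.exact_subtype_ker_map f).split_tfae
    (Submodule.subtype_injective _) hf |>.out 1 0).mp hsplit
  exact Module.Projective.of_split s f hs

theorem maximalIdeal_eq_bot_of_projective_residueField (R : Type*) [CommRing R]
    [IsLocalRing R] [Module.Projective R (ResidueField R)] : maximalIdeal R = ⊥ := by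
  have : Module.Free R (ResidueField R) := Module.free_of_flat_of_isLocalRing
  refine eq_bot_iff.mpr fun y hy => ?_
  have hy0 := (residue_eq_zero_iff y).mpr hy
  refine FaithfulSMul.eq_of_smul_eq_smul (α := ResidueField R) fun c => ?_
  rw [Algebra.smul_def, ResidueField.algebraMap_eq, hy0, zero_mul, zero_smul]

end DepthZero

section Serre

theorem exists_residueField_retract {A : Type*} [CommRing A] [IsLocalRing A] {N : Type*}
    [AddCommGroup N] [Module A N] {y : N} (hy : ∀ a ∈ maximalIdeal A, a • y = 0)
    (hy' : y ∉ maximalIdeal A • (⊤ : Submodule A N)) :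
    ∃ (i : ResidueField A →ₗ[A] N) (r : N →ₗ[A] ResidueField A), r ∘ₗ i = LinearMap.id := by
  let i : ResidueField A →ₗ[A] N :=
    Submodule.liftQ (maximalIdeal A) (LinearMap.toSpanSingleton A N y) hy
  let π := (maximalIdeal A • (⊤ : Submodule A N)).mkQ
  have hπy : π y ≠ 0 := fun h => hy' ((Submodule.Quotient.mk_eq_zero _).mp h)
  let := Ideal.Quotient.field (maximalIdeal A)
  obtain ⟨φ, hφ⟩ := Module.Projective.exists_dual_eq_one (A ⧸ maximalIdeal A) hπy
  let r : N →ₗ[A] ResidueField A := φ.restrictScalars A ∘ₗ π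
  refine ⟨i, r, LinearMap.ext fun c => ?_⟩
  obtain ⟨a, rfl⟩ := residue_surjective c
  calc r (a • y) = a • r y := map_smul r a y
    _ = a • 1 := congrArg (a • ·) hφ
    _ = residue A a := (Algebra.algebraMap_eq_smul_one a).symm

variable {R : Type u} [CommRing R] [IsLocalRing R]

theorem exists_residueField_retract_quotSMulTop_maximalIdeal {x : R}
    (hx : x ∈ maximalIdeal R) (hx2 : x ∉ maximalIdeal R ^ 2) [IsLocalRing (R ⧸ Ideal.span {x})] :
    ∃ (i : ResidueField (R ⧸ Ideal.span {x}) →ₗ[R ⧸ Ideal.span {x}]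
        QuotSMulTop x (maximalIdeal R))
      (r : QuotSMulTop x (maximalIdeal R) →ₗ[R ⧸ Ideal.span {x}]
        ResidueField (R ⧸ Ideal.span {x})), r ∘ₗ i = LinearMap.id := by
  -- The class of `x` in `m / x m` is killed by `m` and splits off as it survives in `m / m²`.
  let A := R ⧸ Ideal.span {x}
  let N := QuotSMulTop x (maximalIdeal R)
  have hlift : ∀ a ∈ maximalIdeal A, ∃ b ∈ maximalIdeal R, Ideal.Quotient.mk _ b = a := fun a ha =>
    (Ideal.mem_map_iff_of_surjective _ Ideal.Quotient.mk_surjective).mp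
      (map_mk_maximalIdeal (Ideal.span {x}) ▸ ha)
  let σ : N →ₗ[R] (maximalIdeal R).Cotangent :=
    Submodule.liftQ _ (maximalIdeal R).toCotangent <| by
      rintro _ ⟨z, -, rfl⟩
      exact (Ideal.toCotangent_eq_zero _ _).mpr
        (pow_two (maximalIdeal R) ▸ Ideal.mul_mem_mul hx z.2)
  have hσ : ∀ z ∈ maximalIdeal A • (⊤ : Submodule A N), σ z = 0 := fun z hz => by
    refine Submodule.smul_induction_on hz (fun a ha n _ => ?_) fun _ _ h₁ h₂ => ?_
    · obtain ⟨b, hb, rfl⟩ := hlift a ha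
      obtain ⟨n, rfl⟩ := Submodule.mkQ_surjective _ n
      exact (Ideal.toCotangent_eq_zero _ (b • n)).mpr
        (pow_two (maximalIdeal R) ▸ Ideal.mul_mem_mul hb n.2)
    · rw [map_add, h₁, h₂, add_zero]
  refine exists_residueField_retract (y := Submodule.Quotient.mk ⟨x, hx⟩) (fun a ha => ?_)
    fun hmem => hx2 ((Ideal.toCotangent_eq_zero _ ⟨x, hx⟩).mp (hσ _ hmem))
  obtain ⟨b, hb, rfl⟩ := hlift a ha
  exact (Submodule.Quotient.mk_eq_zero _).mpr ⟨⟨b, hb⟩, trivial, Subtype.ext (mul_comm x b)⟩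

theorem hasProjectiveDimensionLE_maximalIdeal {n : ℕ}
    [HasProjectiveDimensionLE (ModuleCat.of R (ResidueField R)) n] :
    HasProjectiveDimensionLE (ModuleCat.of R (maximalIdeal R)) n := by
  have hexact : Function.Exact (maximalIdeal R).subtype (Algebra.linearMap R (ResidueField R)) :=
    fun y => by simp [residue_eq_zero_iff]
  refine (hasProjectiveDimensionLE_succ_iff_of_exact (Submodule.subtype_injective _)
    residue_surjective hexact n).mp ?_
  exact hasProjectiveDimensionLT_of_ge _ (n + 1) (n + 2) (Nat.le_succ _)

variable [IsNoetherianRing R]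

theorem exists_isSMulRegular_notMem_sq (hbot : maximalIdeal R ≠ ⊥)
    (hass : maximalIdeal R ∉ associatedPrimes R R) :
    ∃ x ∈ maximalIdeal R, x ∉ maximalIdeal R ^ 2 ∧ IsSMulRegular R x := by
  obtain ⟨x, hx, hx2, hxp⟩ := exists_mem_maximalIdeal_notMem_sq_and_forall_notMem hbot
    (associatedPrimes.finite R R) (fun p hp => hp.isPrime) hass
  refine ⟨x, hx, hx2, ?_⟩
  by_contra hreg
  have hmem : x ∈ ⋃ p ∈ associatedPrimes R R, (p : Set R) := by
    rwa [biUnion_associatedPrimes_eq_compl_regular R R]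
  obtain ⟨p, hp, hxmem⟩ := Set.mem_iUnion₂.mp hmem
  exact hxp p hp hxmem

theorem isRegularLocalRing_of_quotient_span_singleton {x : R} (hx : x ∈ maximalIdeal R)
    (hreg : IsSMulRegular R x) (h : IsRegularLocalRing (R ⧸ Ideal.span {x})) :
    IsRegularLocalRing R := by
  have hx0 : x ∈ nonZeroDivisors R :=
    mem_nonZeroDivisors_iff_right.mpr fun z hz =>
      hreg.right_eq_zero_of_smul (by rwa [smul_eq_mul, mul_comm])
  refine IsRegularLocalRing.of_spanFinrank_maximalIdeal_le _ ?_
  rw [← ringKrullDim_quotient_span_singleton_succ_eq_ringKrullDim_of_mem_nonZeroDivisors hx0 hx,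
    ← h.spanFinrank_maximalIdeal]
  exact_mod_cast spanFinrank_maximalIdeal_le_quotient_add_one hx

theorem isRegularLocalRing_of_hasProjectiveDimensionLE_residueField (R : Type u) [CommRing R]
    [IsLocalRing R] [IsNoetherianRing R] (n : ℕ)
    [hn : HasProjectiveDimensionLE (ModuleCat.of R (ResidueField R)) n] :
    IsRegularLocalRing R := by
  refine noetherianLocalRing_induction (motive := fun R =>
    HasProjectiveDimensionLE (ModuleCat.of R (ResidueField R)) n → IsRegularLocalRing R)
    (fun R _ _ _ ih hn => ?_) R hn
  by_cases hbot : maximalIdeal R = ⊥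
  · let := (isField_iff_maximalIdeal_eq.mpr hbot).toField
    infer_instance
  have hass : maximalIdeal R ∉ associatedPrimes R R := fun hass => hbot <| by
    have := projective_of_mem_associatedPrimes hass n (ResidueField R)
    exact maximalIdeal_eq_bot_of_projective_residueField R
  obtain ⟨x, hx, hx2, hreg⟩ := exists_isSMulRegular_notMem_sq hbot hass
  have := isLocalRing_quotient_span_singleton hx
  have := (hasProjectiveDimensionLE_quotSMulTop_iff hx hreg n (maximalIdeal R)
    (hreg.submodule _ _)).mpr hasProjectiveDimensionLE_maximalIdeal
  obtain ⟨i, r, hri⟩ := exists_residueField_retract_quotSMulTop_maximalIdeal hx hx2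
  exact isRegularLocalRing_of_quotient_span_singleton hx hreg
    (ih x hx hx2 (hasProjectiveDimensionLE_of_leftInverse hri))

end Serre

section Localization

theorem hasProjectiveDimensionLE_of_isLocalizedModule {R : Type u} [CommRing R] (S : Submonoid R)
    {M N : Type u} [AddCommGroup M] [Module R M] [AddCommGroup N] [Module R N]
    [Module (Localization S) N] [IsScalarTower R (Localization S) N] (f : M →ₗ[R] N)
    [IsLocalizedModule S f] {n : ℕ} [HasProjectiveDimensionLE (ModuleCat.of R M) n] :
    HasProjectiveDimensionLE (ModuleCat.of (Localization S) N) n := by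
  have := ModuleCat.localizedModule_hasProjectiveDimensionLE n S (ModuleCat.of R M)
  let e : Shrink.{u} (LocalizedModule S M) ≃ₗ[Localization S] N :=
    Shrink.linearEquiv _ _ ≪≫ₗ
      LinearEquiv.extendScalarsOfIsLocalization S _ (IsLocalizedModule.iso S f)
  exact hasProjectiveDimensionLT_of_iso (X := (ModuleCat.of R M).localizedModule S)
    e.toModuleIso (n + 1)

theorem isRegularRing_of_isRegularLocalRing (R : Type u) [CommRing R] [IsRegularLocalRing R] :
    IsRegularRing R := by
  refine isRegularRing_iff.mpr fun p _ => ?_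
  obtain ⟨n, hn⟩ := exists_hasProjectiveDimensionLE_of_isRegularLocalRing R (R ⧸ p)
  let Rₚ := Localization.AtPrime p
  have hp : Submodule.localized' Rₚ p.primeCompl (Algebra.linearMap R Rₚ) p = maximalIdeal Rₚ := by
    rw [Ideal.localized'_eq_map, Localization.AtPrime.map_eq_maximalIdeal]
  have : HasProjectiveDimensionLE (ModuleCat.of Rₚ (Rₚ ⧸ _)) n :=
    hasProjectiveDimensionLE_of_isLocalizedModule p.primeCompl
      (Submodule.toLocalizedQuotient' Rₚ p.primeCompl (Algebra.linearMap R Rₚ) p)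
  rw [hp] at this
  have : HasProjectiveDimensionLE (ModuleCat.of Rₚ (ResidueField Rₚ)) n := this
  have := IsLocalization.isNoetherianRing p.primeCompl Rₚ inferInstance
  exact isRegularLocalRing_of_hasProjectiveDimensionLE_residueField Rₚ n

end Localization

section StablyFree

section

variable {A K F M : Type*} [Ring A] [AddCommGroup K] [Module A K] [AddCommGroup F] [Module A F]
  [AddCommGroup M] [Module A M] [Module.Projective A M] {g : K →ₗ[A] F} {f : F →ₗ[A] M}

theorem nonempty_linearEquiv_prod_of_exact (hg : Function.Injective g)
    (hf : Function.Surjective f) (hgf : Function.Exact g f) : Nonempty (F ≃ₗ[A] K × M) := by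
  obtain ⟨s, hs⟩ := Module.projective_lifting_property f LinearMap.id hf
  exact ⟨(hgf.splitSurjectiveEquiv hg ⟨s, hs⟩).1⟩

theorem projective_of_exact [Module.Projective A F] (hg : Function.Injective g)
    (hf : Function.Surjective f) (hgf : Function.Exact g f) : Module.Projective A K := by
  obtain ⟨e⟩ := nonempty_linearEquiv_prod_of_exact hg hf hgf
  exact .of_split (e.symm.toLinearMap ∘ₗ .inl A K M) (.fst A K M ∘ₗ e.toLinearMap)
    (by ext; simp)

theorem isStablyFree_of_exact [Module.Finite A F] [Module.Free A F] [Module.IsStablyFree A K]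
    (hg : Function.Injective g) (hf : Function.Surjective f) (hgf : Function.Exact g f) :
    Module.IsStablyFree A M := by
  obtain ⟨e⟩ := nonempty_linearEquiv_prod_of_exact hg hf hgf
  obtain ⟨L, _, _, _, _, _⟩ := Module.IsStablyFree.exist_free_prod A K
  have : Module.Finite A K := .of_surjective (.fst A K M ∘ₗ e.toLinearMap)
    ((LinearMap.fst_surjective (R := A)).comp e.surjective)
  let e' : (F × L) ≃ₗ[A] (K × L) × M :=
    e.prodCongr (.refl A L) ≪≫ₗ .prodAssoc A K M L ≪≫ₗ
      (LinearEquiv.refl A K).prodCongr (.prodComm A M L) ≪≫ₗ (LinearEquiv.prodAssoc A K L M).symm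
  have : Module.Free A ((K × L) × M) := .of_equiv e'
  exact .of_free_prod' A M (K × L)

end

theorem isStablyFree_tensorProduct {R : Type u} [CommRing R] [IsLocalRing R] [IsNoetherianRing R]
    (A : Type*) [CommRing A] [Algebra R A] [Module.Flat R A] (n : ℕ) (M : Type u) [AddCommGroup M]
    [Module R M] [Module.Finite R M] [HasProjectiveDimensionLE (ModuleCat.of R M) n]
    [hM : Module.Projective A (A ⊗[R] M)] : Module.IsStablyFree A (A ⊗[R] M) := by
  refine hasProjectiveDimensionLE_induction (motive := fun M [AddCommGroup M] [Module R M] _ =>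
    Module.Projective A (A ⊗[R] M) → Module.IsStablyFree A (A ⊗[R] M)) (fun M _ _ _ _ _ => ?_)
    (fun F M _ _ _ _ _ _ _ f hf ih _ => ?_) n M hM
  · have : Module.Free R M := Module.free_of_flat_of_isLocalRing
    infer_instance
  · have hg : Function.Injective ((LinearMap.ker f).subtype.baseChange A) :=
      Module.Flat.lTensor_preserves_injective_linearMap _ (Submodule.subtype_injective _)
    have hf' : Function.Surjective (f.baseChange A) := LinearMap.lTensor_surjective A hf
    have hgf : Function.Exact ((LinearMap.ker f).subtype.baseChange A) (f.baseChange A) :=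
      lTensor_exact A (LinearMap.exact_subtype_ker_map f) hf
    have := ih (projective_of_exact hg hf' hgf)
    exact isStablyFree_of_exact hg hf' hgf

end StablyFree

section Invertible

variable {S : Type*} [CommRing S]

theorem isPrincipal_of_isStablyFree_of_invertible (I : Ideal S) [Module.IsStablyFree S I]
    [Module.Invertible S I] : I.IsPrincipal := by
  have hfree := Module.free_of_isStablyFree_of_invertible S I
  obtain ⟨e⟩ := Module.Invertible.free_iff_linearEquiv.mp hfree
  exact ⟨_, Submodule.eq_span_singleton_of_surjective e.symm.surjective⟩

theorem exists_mul_mem_span_singleton_of_isPrincipal_map {I Q : Ideal S} [Q.IsPrime] (hI : I.FG)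
    (h : (I.map (algebraMap S (Localization.AtPrime Q))).IsPrincipal) :
    ∃ a ∈ I, ∃ s ∉ Q, ∀ y ∈ I, s * y ∈ Ideal.span {a} := by
  let SQ := Localization.AtPrime Q
  obtain ⟨g, hg⟩ := h.principal
  have hgI : g ∈ I.map (algebraMap S SQ) := hg ▸ Ideal.mem_span_singleton_self g
  obtain ⟨⟨⟨a, ha⟩, t⟩, hgt⟩ := (IsLocalization.mem_map_algebraMap_iff Q.primeCompl SQ).mp hgI
  have hmap : I.map (algebraMap S SQ) = (Ideal.span {a}).map (algebraMap S SQ) := by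
    rw [Ideal.map_span, Set.image_singleton, ← hgt, Ideal.span_singleton_mul_right_unit
      (IsLocalization.map_units SQ t)]
    exact hg
  have hlocal : ∀ y ∈ I, ∃ s ∈ Q.primeCompl, s * y ∈ Ideal.span {a} := fun y hy =>
    (IsLocalization.algebraMap_mem_map_algebraMap_iff Q.primeCompl SQ _ y).mp
      (hmap ▸ Ideal.mem_map_of_mem _ hy)
  choose! s hsQ hs using hlocal
  obtain ⟨T, rfl⟩ := hI
  have hT : ∀ y ∈ T, y ∈ Ideal.span (T : Set S) := fun y hy => Ideal.subset_span hy
  refine ⟨a, ha, ∏ y ∈ T, s y, Submonoid.prod_mem _ fun y hy => hsQ y (hT y hy), fun y hy => ?_⟩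
  suffices Ideal.span (T : Set S) ≤
      Submodule.comap (LinearMap.mulLeft S (∏ y ∈ T, s y)) (Ideal.span {a}) from this hy
  refine Ideal.span_le.mpr fun y hy => ?_
  obtain ⟨c, hc⟩ := Finset.dvd_prod_of_mem s hy
  change (∏ y ∈ T, s y) * y ∈ Ideal.span {a}
  rw [hc, mul_right_comm]
  exact Ideal.mul_mem_right c _ (hs y (hT y hy))

theorem invertible_of_isUnit_coeIdeal {K : Type*} [Field K] [Algebra S K] [IsFractionRing S K]
    {I : Ideal S} (hI : IsUnit (I : FractionalIdeal (nonZeroDivisors S) K)) :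
    Module.Invertible S I := by
  let J : (Submodule S K)ˣ := FractionalIdeal.unitsMulEquivSubmodule hI.unit
  let e : I ≃ₗ[S] J := Submodule.equivMapOfInjective (Algebra.linearMap S K)
    (IsFractionRing.injective S K) I
  exact .congr e.symm

variable [IsDomain S]

theorem isUnit_coeIdeal_of_isPrincipal_map_localization (K : Type*) [Field K] [Algebra S K]
    [IsFractionRing S K] {I : Ideal S} (hI : I.FG) (hI0 : I ≠ ⊥)
    (h : ∀ (Q : Ideal S) [Q.IsMaximal],
      (I.map (algebraMap S (Localization.AtPrime Q))).IsPrincipal) :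
    IsUnit (I : FractionalIdeal (nonZeroDivisors S) K) := by
  rw [← FractionalIdeal.mul_inv_cancel_iff_isUnit]
  have hI0' : (I : FractionalIdeal (nonZeroDivisors S) K) ≠ 0 :=
    FractionalIdeal.coeIdeal_ne_zero.mpr hI0
  obtain ⟨J, hJ⟩ := FractionalIdeal.le_one_iff_exists_coeIdeal.mp
    (FractionalIdeal.mul_one_div_le_one (I := (I : FractionalIdeal (nonZeroDivisors S) K)))
  rw [FractionalIdeal.inv_eq, ← hJ, FractionalIdeal.coeIdeal_eq_one, Ideal.one_eq_top]
  -- If `s ∉ Q` and `s I ⊆ (a)` with `a ∈ I`, then `s = a * (s / a)` lies in `I * I⁻¹ = J ⊆ Q`.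
  by_contra hJtop
  obtain ⟨Q, hQ, hJQ⟩ := Ideal.exists_le_maximal J hJtop
  obtain ⟨a, ha, s, hsQ, hs⟩ := exists_mul_mem_span_singleton_of_isPrincipal_map hI (h Q)
  have ha0 : algebraMap S K a ≠ 0 := by
    rw [(FaithfulSMul.algebraMap_injective S K).ne_iff' (map_zero _)]
    rintro rfl
    refine hI0 (eq_bot_iff.mpr fun y hy => ?_)
    have hsy : s * y = 0 := by simpa using hs y hy
    exact (mul_eq_zero.mp hsy).resolve_left fun hs0 => hsQ (hs0 ▸ Q.zero_mem)
  have hsa : algebraMap S K s / algebraMap S K a ∈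
      (I : FractionalIdeal (nonZeroDivisors S) K)⁻¹ := by
    refine (FractionalIdeal.mem_inv_iff hI0').mpr fun z hz => ?_
    obtain ⟨y, hy, rfl⟩ := (FractionalIdeal.mem_coeIdeal _).mp hz
    obtain ⟨c, hc⟩ := Ideal.mem_span_singleton'.mp (hs y hy)
    refine (FractionalIdeal.mem_one_iff _).mpr ⟨c, ?_⟩
    rw [div_mul_eq_mul_div, ← map_mul, ← hc, map_mul, mul_div_cancel_right₀ _ ha0]
  have hsJ : algebraMap S K s ∈ (J : FractionalIdeal (nonZeroDivisors S) K) := by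
    rw [hJ, ← mul_div_cancel₀ (algebraMap S K s) ha0]
    exact FractionalIdeal.mul_mem_mul (FractionalIdeal.mem_coeIdeal_of_mem _ ha) hsa
  obtain ⟨s', hs'J, hs'⟩ := (FractionalIdeal.mem_coeIdeal _).mp hsJ
  exact hsQ (FaithfulSMul.algebraMap_injective S K hs' ▸ hJQ hs'J)

theorem invertible_of_isPrincipal_map_localization {I : Ideal S} (hI : I.FG) (hI0 : I ≠ ⊥)
    (h : ∀ (Q : Ideal S) [Q.IsMaximal],
      (I.map (algebraMap S (Localization.AtPrime Q))).IsPrincipal) : Module.Invertible S I :=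
  invertible_of_isUnit_coeIdeal
    (isUnit_coeIdeal_of_isPrincipal_map_localization (FractionRing S) hI hI0 h)

theorem isPrincipal_map_of_height_eq_one {P : Ideal S} [P.IsPrime] (hP : P.height = 1)
    (Q : Ideal S) [Q.IsPrime] [UniqueFactorizationMonoid (Localization.AtPrime Q)] :
    (P.map (algebraMap S (Localization.AtPrime Q))).IsPrincipal := by
  let SQ := Localization.AtPrime Q
  by_cases hPQ : P ≤ Q
  · have hdisj : Disjoint (Q.primeCompl : Set S) (P : Set S) :=
      Set.disjoint_left.mpr fun y hy hyP => hy (hPQ hyP)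
    have := IsLocalization.isPrime_of_isPrime_disjoint Q.primeCompl SQ P ‹_› hdisj
    refine UniqueFactorizationMonoid.isPrincipal_of_height_eq_one ?_
    rw [← IsLocalization.height_under Q.primeCompl,
      IsLocalization.under_map_of_isPrime_disjoint Q.primeCompl _ ‹_› hdisj, hP]
  · obtain ⟨y, hyP, hyQ⟩ := SetLike.not_le_iff_exists.mp hPQ
    have htop : P.map (algebraMap S SQ) = ⊤ := Ideal.eq_top_of_isUnit_mem _
      (Ideal.mem_map_of_mem _ hyP) (IsLocalization.map_units SQ (⟨y, hyQ⟩ : Q.primeCompl))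
    rw [htop]
    infer_instance

theorem invertible_of_height_eq_one [IsNoetherianRing S] {P : Ideal S} [P.IsPrime]
    (hP : P.height = 1)
    (hS : ∀ (Q : Ideal S) [Q.IsMaximal], UniqueFactorizationMonoid (Localization.AtPrime Q)) :
    Module.Invertible S P := by
  have hP0 : P ≠ ⊥ := by
    rintro rfl
    simp only [Ideal.height_bot, zero_ne_one] at hP
  refine invertible_of_isPrincipal_map_localization P.fg_of_isNoetherianRing hP0 fun Q _ => ?_
  have := hS Q
  exact isPrincipal_map_of_height_eq_one hP Q

end Invertible

section UniqueFactorization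

theorem isStablyFree_of_isLocalization {R A : Type*} [CommRing R] [IsRegularLocalRing R]
    [CommRing A] [Algebra R A] (M : Submonoid R) [IsLocalization M A] (P : Ideal A)
    [Module.Projective A P] : Module.IsStablyFree A P := by
  have := IsLocalization.flat A M
  obtain ⟨n, _⟩ := exists_hasProjectiveDimensionLE_of_isRegularLocalRing R (P.under R)
  have hP : Submodule.localized' A M (Algebra.linearMap R A) (P.under R) = P := by
    rw [Ideal.localized'_eq_map, IsLocalization.map_under M]
  have e : A ⊗[R] (P.under R) ≃ₗ[A] P :=
    (IsLocalizedModule.isBaseChange M A (Submodule.toLocalized' A M (Algebra.linearMap R A)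
      (P.under R))).equiv ≪≫ₗ .ofEq _ _ hP
  have : Module.Projective A (A ⊗[R] P.under R) := .of_equiv e.symm
  have := isStablyFree_tensorProduct (R := R) A n (P.under R)
  exact .equiv e

theorem spanFinrank_maximalIdeal_localization_lt {R : Type*} [CommRing R] [IsRegularLocalRing R]
    {q : Ideal R} [q.IsPrime] (hq : q < maximalIdeal R) :
    (maximalIdeal (Localization.AtPrime q)).spanFinrank < (maximalIdeal R).spanFinrank := by
  have := isRegularRing_of_isRegularLocalRing R
  have hheight : q.height < (maximalIdeal R).height :=
    Ideal.height_strict_mono_of_isPrime_of_isPrime hq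
  have : IsRegularLocalRing (Localization.AtPrime q) := inferInstance
  have hq' := IsRegularLocalRing.spanFinrank_maximalIdeal (R := Localization.AtPrime q)
  have hR := IsRegularLocalRing.spanFinrank_maximalIdeal (R := R)
  rw [IsLocalization.AtPrime.ringKrullDim_eq_height q] at hq'
  rw [← maximalIdeal_height_eq_ringKrullDim] at hR
  have hlt : (q.height : WithBot ℕ∞) < (maximalIdeal R).height := WithBot.coe_lt_coe.mpr hheight
  rw [← hq', ← hR] at hlt
  exact_mod_cast hlt

theorem prime_of_mem_maximalIdeal_notMem_sq {R : Type*} [CommRing R] [IsRegularLocalRing R]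
    {x : R} (hx : x ∈ maximalIdeal R) (hx2 : x ∉ maximalIdeal R ^ 2) : Prime x := by
  have := isRegularLocalRing_quotient_span_singleton hx hx2
  have := isDomain_of_isRegularLocalRing (R ⧸ Ideal.span {x})
  have hx0 : x ≠ 0 := by
    rintro rfl
    exact hx2 (zero_mem _)
  exact (Ideal.span_singleton_prime hx0).mp ((Ideal.Quotient.isDomain_iff_prime _).mp this)

theorem uniqueFactorizationMonoid_localizationAtPrime_away {R : Type*} [CommRing R]
    [IsRegularLocalRing R] {x : R} (hx : x ∈ maximalIdeal R)
    (hR : ∀ (q : Ideal R) [q.IsPrime], q < maximalIdeal R →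
      UniqueFactorizationMonoid (Localization.AtPrime q))
    (Q : Ideal (Localization.Away x)) [Q.IsPrime] :
    UniqueFactorizationMonoid (Localization.AtPrime Q) := by
  have hq : Q.under R < maximalIdeal R := by
    refine lt_of_le_of_ne (le_maximalIdeal Ideal.IsPrime.ne_top') fun h => ?_
    have hxQ : x ∈ Q.under R := h ▸ hx
    exact Ideal.IsPrime.ne_top' (Ideal.eq_top_of_isUnit_mem Q hxQ
      (IsLocalization.Away.algebraMap_isUnit x))
  have hufd := hR _ hq
  have : IsLocalization.AtPrime (Localization.AtPrime Q) (Q.under R) :=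
    IsLocalization.isLocalization_isLocalization_atPrime_isLocalization (Submonoid.powers x) _ Q
  exact (IsLocalization.algEquiv (Q.under R).primeCompl (Localization.AtPrime (Q.under R))
    (Localization.AtPrime Q)).toMulEquiv.uniqueFactorizationMonoid hufd

theorem uniqueFactorizationMonoid_of_forall_localization {R : Type*} [CommRing R]
    [IsRegularLocalRing R] (hR : ∀ (q : Ideal R) [q.IsPrime], q < maximalIdeal R →
      UniqueFactorizationMonoid (Localization.AtPrime q)) :
    UniqueFactorizationMonoid R := by
  have := isDomain_of_isRegularLocalRing R
  by_cases hbot : maximalIdeal R = ⊥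
  · let := (isField_iff_maximalIdeal_eq.mpr hbot).toField
    exact inferInstanceAs (UniqueFactorizationMonoid R)
  obtain ⟨x, hx, hx2⟩ := SetLike.not_le_iff_exists.mp (maximalIdeal_not_le_sq hbot)
  have hprime : Prime x := prime_of_mem_maximalIdeal_notMem_sq hx hx2
  rw [UniqueFactorizationMonoid.iff_localizationAway_of_prime hprime]
  let S := Localization.Away x
  have : IsDomain S := IsLocalization.isDomain_of_le_nonZeroDivisors S
    (powers_le_nonZeroDivisors_of_noZeroDivisors hprime.ne_zero)
  have : IsNoetherianRing S :=
    IsLocalization.isNoetherianRing (Submonoid.powers x) S inferInstance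
  have hSQ (Q : Ideal S) [Q.IsMaximal] : UniqueFactorizationMonoid (Localization.AtPrime Q) :=
    uniqueFactorizationMonoid_localizationAtPrime_away hx hR Q
  refine UniqueFactorizationMonoid.of_forall_isPrincipal_of_height_eq_one fun P _ hP => ?_
  have := invertible_of_height_eq_one hP hSQ
  have := isStablyFree_of_isLocalization (Submonoid.powers x) P
  exact isPrincipal_of_isStablyFree_of_invertible P

theorem uniqueFactorizationMonoid_of_isRegularLocalRing (R : Type u) [CommRing R]
    [IsRegularLocalRing R] : UniqueFactorizationMonoid R := by
  induction hn : (maximalIdeal R).spanFinrank using Nat.strong_induction_on generalizing R with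
  | _ n ih =>
    have := isRegularRing_of_isRegularLocalRing R
    exact uniqueFactorizationMonoid_of_forall_localization fun q _ hq =>
      ih _ (hn ▸ spanFinrank_maximalIdeal_localization_lt hq) _ rfl

end UniqueFactorization

end AuslanderBuchsbaum

/-- Auslander–Buchsbaum: a (noetherian) regular local ring is a unique factorization
domain.  Regularity is encoded as: the Krull dimension equals the minimal number of
generators of the maximal ideal. -/
theorem regular_local_is_UFD {R : Type*} [CommRing R] [IsDomain R] [IsNoetherianRing R]
    [IsLocalRing R] (n : ℕ) (hdim : ringKrullDim R = n)
    (hreg : ∃ s : Finset R, s.card = n ∧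
      Ideal.span (s : Set R) = IsLocalRing.maximalIdeal R) :
    UniqueFactorizationMonoid R := by
  obtain ⟨s, hs, hspan⟩ := hreg
  have hle : (maximalIdeal R).spanFinrank ≤ n := by
    simpa only [hspan, Set.ncard_coe_finset, hs] using
      Submodule.spanFinrank_span_le_ncard_of_finite (R := R) s.finite_toSet
  have : IsRegularLocalRing R :=
    .of_spanFinrank_maximalIdeal_le _ (by rw [hdim]; exact_mod_cast hle)
  exact AuslanderBuchsbaum.uniqueFactorizationMonoid_of_isRegularLocalRing R
end

section
/- Let R be a strictly henselian local ring. Then every finite étale cover of Spec R is trivial, i.e., a finite disjoint union of copies of Spec R; equivalently, every finite étale R-algebra is a finite product of copies of R. -/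
universe u

/-!
An étale algebra `S` over a henselian local ring `R` is, near the kernel of a point
`S → k` of its closed fibre, of the form `(R[X]/f)[1/g]` with `f'` invertible. The point is then a
simple root of `f` in `k`, which lifts to `R` by Hensel's lemma. When `k ⊗[R] S ≃ kⁿ`, lifting the
`n` coordinates gives a map `S → Rⁿ` of finite `R`-modules which is an isomorphism modulo the
maximal ideal; as `Rⁿ` is free, Nakayama's lemma makes it an isomorphism. Over a separably closed
field every étale algebra is a finite product of copies of the field.
-/

section

open IsLocalRing Polynomial TensorProduct

attribute [local instance] RingHom.ker_isPrime

section LiftingPoints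

variable {R S : Type*} [CommRing R] [HenselianLocalRing R] [CommRing S] [Algebra R S]

theorem exists_hasMap_residue_eq (P : StandardEtalePair R) {x : ResidueField R}
    (hx : P.HasMap x) : ∃ a : R, P.HasMap a ∧ residue R a = x := by
  have lift_simple_root := ((HenselianLocalRing.TFAE R).out 0 1).mp ‹_›
  obtain ⟨a, hroot, rfl⟩ := lift_simple_root P.f P.monic_f x hx.1 hx.isUnit_derivative_f.ne_zero
  have hunit : IsUnit (residue R (aeval a P.g)) := by
    simpa only [← ResidueField.algebraMap_eq, aeval_algebraMap_apply] using hx.2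
  exact ⟨a, ⟨by rwa [coe_aeval_eq_eval], isUnit_of_map_unit _ _ hunit⟩, rfl⟩

theorem exists_algHom_ofId_comp_eq_of_isStandardEtale [Algebra.IsStandardEtale R S]
    (φ : S →ₐ[R] ResidueField R) :
    ∃ ψ : S →ₐ[R] R, (Algebra.ofId R (ResidueField R)).comp ψ = φ := by
  obtain ⟨P⟩ := Algebra.IsStandardEtale.nonempty_standardEtalePresentation (R := R) (S := S)
  obtain ⟨a, ha, hax⟩ := exists_hasMap_residue_eq P.P (P.hasMap.map φ)
  refine ⟨(P.lift a ha).comp P.equivRing.toAlgHom, P.hom_ext ?_⟩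
  simpa [Algebra.ofId_apply] using hax

theorem exists_algHom_ofId_comp_eq_of_isEtaleAt_ker [Algebra.FinitePresentation R S]
    (φ : S →ₐ[R] ResidueField R) [Algebra.IsEtaleAt R (RingHom.ker φ)] :
    ∃ ψ : S →ₐ[R] R, (Algebra.ofId R (ResidueField R)).comp ψ = φ := by
  obtain ⟨g, hg, _⟩ := Algebra.IsEtaleAt.exists_isStandardEtale (R := R) (RingHom.ker φ)
  have hφg : IsUnit (φ g) := isUnit_iff_ne_zero.mpr hg
  obtain ⟨ψ, hψ⟩ := exists_algHom_ofId_comp_eq_of_isStandardEtale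
    (IsLocalization.Away.liftAlgHom (S := Localization.Away g) g hφg)
  refine ⟨ψ.comp (IsScalarTower.toAlgHom R S (Localization.Away g)), ?_⟩
  rw [← AlgHom.comp_assoc, hψ]
  ext s
  simp [IsLocalization.Away.liftAlgHom]

end LiftingPoints

section ClosedFibre

variable {R M N : Type*} [CommRing R] [IsLocalRing R] [AddCommGroup M] [AddCommGroup N]
  [Module R M] [Module R N]

theorem surjective_of_lTensor_residueField_surjective [Module.Finite R N] (l : M →ₗ[R] N)
    (hl : Function.Surjective (l.lTensor (ResidueField R))) : Function.Surjective l := by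
  rw [← LinearMap.range_eq_top, ← map_tensorProduct_mk_eq_top, eq_top_iff]
  intro y _
  obtain ⟨x, rfl⟩ := hl y
  obtain ⟨m, rfl⟩ := TensorProduct.mk_surjective R M (ResidueField R) residue_surjective x
  exact ⟨l m, ⟨m, rfl⟩, rfl⟩

theorem bijective_of_lTensor_residueField_bijective [Module.Finite R M] [Module.Finite R N]
    [Module.Free R N] (l : M →ₗ[R] N)
    (hl : Function.Bijective (l.lTensor (ResidueField R))) : Function.Bijective l := by
  obtain ⟨r, hr⟩ := (split_injective_iff_lTensor_residueField_injective l).mpr hl.injective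
  exact ⟨LinearMap.injective_of_comp_eq_id _ _ hr,
    surjective_of_lTensor_residueField_surjective l hl.surjective⟩

theorem bijective_pi_of_residueField_tensorProduct_equiv {ι : Type*} [Finite ι] [Module.Finite R M]
    (e : ResidueField R ⊗[R] M ≃ₗ[ResidueField R] (ι → ResidueField R)) (l : ι → M →ₗ[R] R)
    (hl : ∀ i m, residue R (l i m) = e (1 ⊗ₜ m) i) : Function.Bijective (LinearMap.pi l) := by
  classical
  have := Fintype.ofFinite ι
  let E := TensorProduct.piScalarRight R (ResidueField R) (ResidueField R) ι
  have hE : E.toLinearMap ∘ₗ (LinearMap.pi l).baseChange (ResidueField R) = e.toLinearMap := by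
    ext m i
    simp [E, hl, Algebra.smul_def]
  have hbij : Function.Bijective
      (E.toLinearMap ∘ₗ (LinearMap.pi l).baseChange (ResidueField R)) := by
    rw [hE]
    exact e.bijective
  exact bijective_of_lTensor_residueField_bijective _ ((E.bijective.of_comp_iff' _).mp hbij)

end ClosedFibre

theorem finite_etale_algebra_over_strictly_henselian_is_trivial_general (R S : Type*) [CommRing R]
    [HenselianLocalRing R] [CommRing S] [Algebra R S] [Module.Finite R S] [Algebra.Etale R S]
    [Algebra.IsFiniteSplit (ResidueField R) (ResidueField R ⊗[R] S)] :
    Algebra.IsFiniteSplit R S := by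
  obtain ⟨n, ⟨e⟩⟩ := Algebra.IsFiniteSplit.nonempty_algEquiv_fun (ResidueField R)
    (ResidueField R ⊗[R] S)
  let φ (i : Fin n) : S →ₐ[R] ResidueField R :=
    (((Pi.evalAlgHom _ _ i).comp e.toAlgHom).restrictScalars R).comp
      Algebra.TensorProduct.includeRight
  choose ψ hψ using fun i ↦ exists_algHom_ofId_comp_eq_of_isEtaleAt_ker (φ i)
  have hbij : Function.Bijective (AlgHom.pi ψ) :=
    bijective_pi_of_residueField_tensorProduct_equiv e.toLinearEquiv
      (fun i ↦ (ψ i).toLinearMap) fun i s ↦ DFunLike.congr_fun (hψ i) s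
  exact ⟨n, ⟨AlgEquiv.ofBijective _ hbij⟩⟩

end

/-- Let `R` be a strictly henselian local ring (henselian with separably closed residue
field).  Then every finite étale `R`-algebra is a finite product of copies of `R`. -/
theorem finite_etale_algebra_over_strictly_henselian_is_trivial {R : Type u} [CommRing R]
    [HenselianLocalRing R] [IsSepClosed (IsLocalRing.ResidueField R)]
    (S : Type u) [CommRing S] [Algebra R S] [Module.Finite R S] [Algebra.Etale R S] :
    ∃ n : ℕ, Nonempty (S ≃ₐ[R] (Fin n → R)) :=
  (finite_etale_algebra_over_strictly_henselian_is_trivial_general R S).nonempty_algEquiv_fun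
end
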